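/- Let δ = c_{J̄}·x⁰_{J̄} − K. Suppose there exist real numbers z_l < z_r such that F(z) ≠ ∅ if and only if z ∈ [z_l, z_r], and suppose there exist ε ∈ (0, z_r − z_l] and k ∈ ℝ with ψ(z) = ψ(z_r) + k·(z − z_r) for all z ∈ [z_r − ε, z_r] and k ≥ δ. If ȳ ∈ F(z_r) satisfies c·ȳ = ψ(z_r), then for every z ∈ ℝ and every y ∈ F(z) one has c·y − δ·z ≤ c·ȳ − δ·z_r; that is, (ȳ, z_r) is an optimal solution of the problem of maximizing c·y + (K − c_{J̄}·x⁰_{J̄})·z over all pairs (y, z) with y ∈ F(z). -/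

import Mathlib

open Matrix BigOperators

/-- Feasible region of the sub-problem `(D^z)`. -/
def Dfeas {m n : ℕ} (A : Matrix (Fin m) (Fin n) ℝ) (d x0 : Fin n → ℝ) (z : ℝ) :
    Set (Fin n → ℝ) :=
  {y | A.mulVec y = 0 ∧
    (∀ j, x0 j = 0 → -d j ≤ y j ∧ y j ≤ 0) ∧
    (∀ j, 0 < x0 j → x0 j * z - d j ≤ y j ∧ y j ≤ x0 j * z + d j)}

/-- `ψ(z) = sup {c·y : y ∈ F(z)}`. -/
noncomputable def psi {m n : ℕ} (A : Matrix (Fin m) (Fin n) ℝ)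
    (c d x0 : Fin n → ℝ) (z : ℝ) : ℝ :=
  sSup ((fun y => c ⬝ᵥ y) '' Dfeas A d x0 z)

/-!
The pairs `(y, z)` with `y ∈ F(z)` form a convex set on which the objective `c·y - δz` is linear, so
a local maximum is a global one. Since `c·y ≤ ψ(z)`, with equality at `(ȳ, z_r)`, it is enough that
`ψ(z) - δz` has a local maximum at `z_r` among the admissible parameters; a slope of at least `δ`
to the left of `z_r` makes `z_r` a local maximum on `(-∞, z_r]`.
-/

/-- The graph of the feasible-set map `z ↦ F(z)`, i.e. the feasible set of the problem of maximizing
`c·y - δz` jointly over `(y, z)`. -/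
def jointFeasibleSet {m n : ℕ} (A : Matrix (Fin m) (Fin n) ℝ) (d x0 : Fin n → ℝ) :
    Set ((Fin n → ℝ) × ℝ) :=
  {p | p.1 ∈ Dfeas A d x0 p.2}

theorem isMaxOn_of_concaveOn_of_le_comp {E Z : Type*} [AddCommGroup E] [TopologicalSpace E]
    [Module ℝ E] [IsTopologicalAddGroup E] [ContinuousSMul ℝ E] [TopologicalSpace Z]
    {G : Set E} {s : Set Z} {f : E → ℝ} {v : Z → ℝ} {π : E → Z} {p₀ : E}
    (hf : ConcaveOn ℝ G f) (hπ : ContinuousOn π G) (hGs : Set.MapsTo π G s)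
    (hle : ∀ p ∈ G, f p ≤ v (π p)) (hp₀ : p₀ ∈ G) (heq : f p₀ = v (π p₀))
    (hv : IsLocalMaxOn v s (π p₀)) : IsMaxOn f G p₀ := by
  refine IsMaxOn.of_isLocalMaxOn_of_concaveOn hp₀ ?_ hf
  filter_upwards [hv.comp_continuousOn hGs hπ hp₀, self_mem_nhdsWithin] with p hvp hp
  exact (hle p hp).trans (hvp.trans_eq heq.symm)

theorem concaveOn_dotProduct_sub_mul {ι : Type*} [Fintype ι] (c : ι → ℝ) (δ : ℝ)
    {G : Set ((ι → ℝ) × ℝ)} (hG : Convex ℝ G) : ConcaveOn ℝ G fun p => c ⬝ᵥ p.1 - δ * p.2 :=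
  (dotProductBilin ℝ ℝ c ∘ₗ LinearMap.fst ℝ (ι → ℝ) ℝ - δ • LinearMap.snd ℝ (ι → ℝ) ℝ).concaveOn hG

open scoped Topology in
theorem isLocalMaxOn_Iic_sub_mul_of_le_slope {v : ℝ → ℝ} {z₀ k δ : ℝ}
    (hv : ∀ᶠ z in 𝓝[≤] z₀, v z ≤ v z₀ + k * (z - z₀)) (hδ : δ ≤ k) :
    IsLocalMaxOn (fun z => v z - δ * z) (Set.Iic z₀) z₀ := by
  filter_upwards [hv, self_mem_nhdsWithin] with z hvz hz
  have hslope : k * (z - z₀) ≤ δ * (z - z₀) :=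
    mul_le_mul_of_nonpos_right hδ (sub_nonpos.2 hz)
  linarith

section DualSubproblem

variable {m n : ℕ} (A : Matrix (Fin m) (Fin n) ℝ) {c d x0 : Fin n → ℝ}

theorem convex_jointFeasibleSet : Convex ℝ (jointFeasibleSet A d x0) := by
  rintro ⟨y, z⟩ ⟨hAy, hzero, hpos⟩ ⟨y', z'⟩ ⟨hAy', hzero', hpos'⟩ a b ha hb hab
  refine ⟨?_, fun j hj => ?_, fun j hj => ?_⟩
  · change A *ᵥ (a • y + b • y') = 0
    rw [mulVec_add, mulVec_smul, mulVec_smul, hAy, hAy', smul_zero, smul_zero, add_zero]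
  · exact convex_Icc (-d j) 0 (hzero j hj) (hzero' j hj) ha hb hab
  · have hdev {w t : ℝ} : x0 j * t - d j ≤ w ∧ w ≤ x0 j * t + d j ↔
        w - x0 j * t ∈ Set.Icc (-d j) (d j) := by
      constructor <;> exact fun h => ⟨by linarith [h.1], by linarith [h.2]⟩
    refine hdev.2 ?_
    convert convex_Icc (-d j) (d j) (hdev.1 (hpos j hj)) (hdev.1 (hpos' j hj)) ha hb hab using 1
    simp only [Prod.smul_mk, Prod.mk_add_mk, Pi.add_apply, Pi.smul_apply, smul_eq_mul]
    ring

theorem Dfeas_subset_Icc (hx0 : ∀ j, 0 ≤ x0 j) (z : ℝ) :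
    Dfeas A d x0 z ⊆ Set.Icc (z • x0 - d) (z • x0 + d) := by
  rintro y ⟨-, hzero, hpos⟩
  have hbounds (j : Fin n) : z * x0 j - d j ≤ y j ∧ y j ≤ z * x0 j + d j := by
    rcases (hx0 j).eq_or_lt' with hj | hj
    · obtain ⟨hlower, hupper⟩ := hzero j hj
      rw [hj, mul_zero]
      constructor <;> linarith
    · simpa only [mul_comm z] using hpos j hj
  exact ⟨fun j => (hbounds j).1, fun j => (hbounds j).2⟩

theorem dotProduct_le_psi (hx0 : ∀ j, 0 ≤ x0 j) {z : ℝ} {y : Fin n → ℝ}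
    (hy : y ∈ Dfeas A d x0 z) : c ⬝ᵥ y ≤ psi A c d x0 z := by
  have hcont : Continuous (fun y : Fin n → ℝ => c ⬝ᵥ y) := by fun_prop
  have hbdd : BddAbove ((fun y => c ⬝ᵥ y) '' Dfeas A d x0 z) :=
    (isCompact_Icc.bddAbove_image hcont.continuousOn).mono
      (Set.image_mono (Dfeas_subset_Icc A hx0 z))
  exact le_csSup hbdd (Set.mem_image_of_mem _ hy)

theorem critical_value_right_break_general (hx0 : ∀ j, 0 ≤ x0 j) {s : Set ℝ} (hs : Convex ℝ s)
    {δ z₀ : ℝ} (hz₀ : z₀ ∈ s) (hlocal : IsLocalMaxOn (fun z => psi A c d x0 z - δ * z) s z₀)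
    {ybar : Fin n → ℝ} (hybar : ybar ∈ Dfeas A d x0 z₀) (hybaropt : c ⬝ᵥ ybar = psi A c d x0 z₀) :
    ∀ z ∈ s, ∀ y ∈ Dfeas A d x0 z, c ⬝ᵥ y - δ * z ≤ c ⬝ᵥ ybar - δ * z₀ := by
  have hconvex : Convex ℝ (jointFeasibleSet A d x0 ∩ Prod.snd ⁻¹' s) :=
    (convex_jointFeasibleSet A).inter (hs.linear_preimage (LinearMap.snd ℝ (Fin n → ℝ) ℝ))
  have hmax := isMaxOn_of_concaveOn_of_le_comp (p₀ := (ybar, z₀))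
    (concaveOn_dotProduct_sub_mul c δ hconvex) continuousOn_snd (fun _ hp => hp.2)
    (fun p hp => sub_le_sub_right (dotProduct_le_psi A hx0 hp.1) (δ * p.2))
    ⟨hybar, hz₀⟩ (congrArg (· - δ * z₀) hybaropt) hlocal
  exact fun z hz y hy => hmax (show (y, z) ∈ _ from ⟨hy, hz⟩)

end DualSubproblem

/-- if `F(z) ≠ ∅` exactly on `[z_l, z_r]`, `ψ` is linear with slope
`k ≥ δ` on `[z_r−ε, z_r]`, and `ȳ` attains `ψ(z_r)`, then `(ȳ, z_r)` maximizes
`c·y − δ·z` over all pairs `(y, z)` with `y ∈ F(z)`. -/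
theorem critical_value_right_break {m n : ℕ} (A : Matrix (Fin m) (Fin n) ℝ)
    (c d x0 : Fin n → ℝ) (hd : ∀ j, 0 < d j) (hx0 : ∀ j, 0 ≤ x0 j) (K : ℝ)
    (δ : ℝ) (hδ : δ = (∑ j, if 0 < x0 j then c j * x0 j else 0) - K)
    (zl zr : ℝ) (hlt : zl < zr)
    (hiff : ∀ z : ℝ, (Dfeas A d x0 z).Nonempty ↔ z ∈ Set.Icc zl zr)
    (ε : ℝ) (hε0 : 0 < ε) (hεle : ε ≤ zr - zl) (k : ℝ)
    (hk : ∀ z ∈ Set.Icc (zr - ε) zr,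
      psi A c d x0 z = psi A c d x0 zr + k * (z - zr))
    (hkδ : δ ≤ k)
    (ybar : Fin n → ℝ) (hybar : ybar ∈ Dfeas A d x0 zr)
    (hybaropt : c ⬝ᵥ ybar = psi A c d x0 zr) :
    ∀ z : ℝ, ∀ y ∈ Dfeas A d x0 z, c ⬝ᵥ y - δ * z ≤ c ⬝ᵥ ybar - δ * zr := by
  have hlocal : IsLocalMaxOn (fun z => psi A c d x0 z - δ * z) (Set.Iic zr) zr := by
    refine isLocalMaxOn_Iic_sub_mul_of_le_slope ?_ hkδ
    filter_upwards [Icc_mem_nhdsLE (sub_lt_self zr hε0)] with z hz using (hk z hz).le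
  exact fun z y hy => critical_value_right_break_general A hx0 (convex_Iic zr) Set.self_mem_Iic
    hlocal hybar hybaropt z ((hiff z).1 ⟨y, hy⟩).2 y hy
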